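/- For every p > 1, the Wasserstein space 𝒲_p(Q) over Q = [−1,1]² with the maximum metric is diagonally rigid: for every isometry Φ : 𝒲_p(Q) → 𝒲_p(Q) there exists an isometry T of (Q, d_m) such that (Φ ∘ T_#)(μ) = μ for every μ ∈ 𝒲_p(Q) whose support is contained in L₊ = {(t,t) : t ∈ [−1,1]} or in L₋ = {(t,−t) : t ∈ [−1,1]}. -/

import Mathlib

open MeasureTheory

/-- The `p`-Wasserstein distance between two measures, defined as the infimum over all
couplings `π` of `μ` and `ν` of `(∬ d(x,y)^p dπ)^(1/p)`. -/
noncomputable def Wdist {X : Type*} [MeasurableSpace X] [PseudoMetricSpace X] (p : ℝ)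
    (μ ν : Measure X) : ℝ :=
  (⨅ π ∈ {π : Measure (X × X) | π.map Prod.fst = μ ∧ π.map Prod.snd = ν},
    (∫⁻ q, edist q.1 q.2 ^ p ∂π) ^ (1 / p)).toReal

/-- The `p`-Wasserstein space over `X`: Borel probability measures on `X` with finite
`p`-th moment. -/
def WSet (X : Type*) [MeasurableSpace X] [PseudoMetricSpace X] (p : ℝ) : Set (Measure X) :=
  {μ | IsProbabilityMeasure μ ∧ ∃ x₀ : X, ∫⁻ x, edist x x₀ ^ p ∂μ < ⊤}

/-- An isometry of the underlying metric space: a distance-preserving bijection. -/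
def IsIsom {X : Type*} [PseudoMetricSpace X] (T : X → X) : Prop :=
  Function.Bijective T ∧ ∀ x y, dist (T x) (T y) = dist x y

/-- An isometry of the `p`-Wasserstein space over `X`: a bijection of the space of
probability measures with finite `p`-th moment preserving the Wasserstein distance. -/
def IsWIsometry (X : Type*) [MeasurableSpace X] [PseudoMetricSpace X] (p : ℝ)
    (Φ : Measure X → Measure X) : Prop :=
  Set.BijOn Φ (WSet X p) (WSet X p) ∧
    ∀ μ ∈ WSet X p, ∀ ν ∈ WSet X p, Wdist p (Φ μ) (Φ ν) = Wdist p μ ν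

/-- The (topological) support of a measure. -/
def msupport {X : Type*} [TopologicalSpace X] [MeasurableSpace X] (μ : Measure X) : Set X :=
  {x | ∀ U : Set X, IsOpen U → x ∈ U → μ U ≠ 0}

def diagLine (ε a : ℝ) : Set (ℝ × ℝ) := {z | z.2 = ε * z.1 + a}

def Lplus : Set (ℝ × ℝ) := {z | z.2 = z.1}

def Lminus : Set (ℝ × ℝ) := {z | z.2 = -z.1}

/-- The closed square `Q = [-1,1]²`. -/
abbrev Qs : Set (ℝ × ℝ) := Set.Icc (-1, -1) (1, 1)

def LplusQ : Set ↥Qs := {q | (q : ℝ × ℝ).2 = (q : ℝ × ℝ).1}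

def LminusQ : Set ↥Qs := {q | (q : ℝ × ℝ).2 = -(q : ℝ × ℝ).1}

/-!
The vertices of the square are, up to order, its only four points at mutual distance `2`, the
diameter. Hence `Φ` permutes the Dirac masses at the vertices. It sends antipodal vertices to
antipodal vertices: two adjacent vertices have a midpoint at distance `2` from the other two
vertices, and if they became antipodal, then the image of its Dirac mass would live on two antipodal
vertices and give `1 ^ p + 1 ^ p = 2 ^ p`. After composing with an isometry of the square, `Φ` fixes
the four Dirac masses, and therefore every mixture of two antipodal ones.

Let `c, c'` be two points and `k x = d(x, c) ^ p - d(x, c') ^ p`. By Kantorovich duality the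
distances of `μ` to all mixtures of the Dirac masses at `c` and `c'` determine
`s ↦ ∫ max (s - k) 0 ∂μ`, hence the law of `k` under `μ`. For the endpoints of one diagonal this law
tells whether `μ` lives on the other diagonal; there `k`, for the endpoints of that other diagonal,
is injective, so `μ` is determined.
-/

open ProbabilityTheory

section Coupling

variable {X : Type*} [MeasurableSpace X] {μ ν : Measure X} {π : Measure (X × X)}

/-- `π` is a coupling of `μ` and `ν`: these are its two marginals. The conjunction is the condition
defining the index set of the infimum in `Wdist`. -/
def IsCoupling (π : Measure (X × X)) (μ ν : Measure X) : Prop :=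
  π.map Prod.fst = μ ∧ π.map Prod.snd = ν

lemma IsCoupling.isProbabilityMeasure (h : IsCoupling π μ ν) [IsProbabilityMeasure μ] :
    IsProbabilityMeasure π := by
  rw [← Measure.isProbabilityMeasure_map_iff measurable_fst.aemeasurable, h.1]
  infer_instance

lemma isCoupling_prod (μ ν : Measure X) [IsProbabilityMeasure μ] [IsProbabilityMeasure ν] :
    IsCoupling (μ.prod ν) μ ν :=
  ⟨Measure.fst_prod, Measure.snd_prod⟩

lemma isCoupling_map_graph {T : X → X} (hT : Measurable T) (μ : Measure X) :
    IsCoupling (μ.map fun x ↦ (x, T x)) μ (μ.map T) := by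
  have hg : Measurable fun x ↦ (x, T x) := measurable_id.prodMk hT
  refine ⟨?_, ?_⟩
  · rw [Measure.map_map measurable_fst hg]
    exact Measure.map_id
  · rw [Measure.map_map measurable_snd hg]
    rfl

lemma IsCoupling.map_prodMap (h : IsCoupling π μ ν) {T : X → X} (hT : Measurable T) :
    IsCoupling (π.map (Prod.map T T)) (μ.map T) (ν.map T) := by
  have hTT : Measurable (Prod.map T T) := hT.prodMap hT
  rw [← h.1, ← h.2]
  refine ⟨?_, ?_⟩
  · rw [Measure.map_map measurable_fst hTT, Measure.map_map hT measurable_fst, Prod.map_fst']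
  · rw [Measure.map_map measurable_snd hTT, Measure.map_map hT measurable_snd, Prod.map_snd']

lemma IsCoupling.integral_fst (h : IsCoupling π μ ν) {f : X → ℝ} (hf : AEStronglyMeasurable f μ) :
    ∫ q, f q.1 ∂π = ∫ x, f x ∂μ := by
  rw [← h.1] at hf ⊢
  exact (integral_map measurable_fst.aemeasurable hf).symm

lemma IsCoupling.integral_snd (h : IsCoupling π μ ν) {f : X → ℝ} (hf : AEStronglyMeasurable f ν) :
    ∫ q, f q.2 ∂π = ∫ x, f x ∂ν := by
  rw [← h.2] at hf ⊢
  exact (integral_map measurable_snd.aemeasurable hf).symm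

lemma IsCoupling.integrable_fst (h : IsCoupling π μ ν) {f : X → ℝ} (hf : Integrable f μ) :
    Integrable (fun q ↦ f q.1) π :=
  Integrable.comp_measurable (h.1.symm ▸ hf) measurable_fst

lemma IsCoupling.integrable_snd (h : IsCoupling π μ ν) {f : X → ℝ} (hf : Integrable f ν) :
    Integrable (fun q ↦ f q.2) π :=
  Integrable.comp_measurable (h.2.symm ▸ hf) measurable_snd

lemma IsCoupling.ae_snd (h : IsCoupling π μ ν) {P : X → Prop} (hP : ∀ᵐ y ∂ν, P y) :
    ∀ᵐ q ∂π, P q.2 :=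
  ae_of_ae_map measurable_snd.aemeasurable (h.2.symm ▸ hP)

end Coupling

section Wasserstein

lemma Wdist_nonneg {X : Type*} [MeasurableSpace X] [PseudoMetricSpace X] (p : ℝ)
    (μ ν : Measure X) : 0 ≤ Wdist p μ ν :=
  ENNReal.toReal_nonneg

variable {X : Type*} [MetricSpace X] [BoundedSpace X] [SecondCountableTopology X]
  [MeasurableSpace X] [OpensMeasurableSpace X] {p : ℝ} {μ ν : Measure X}

lemma integrable_dist_rpow {α : Type*} [MeasurableSpace α] {f g : α → X} (hf : Measurable f)
    (hg : Measurable g) (hp : 0 ≤ p) (m : Measure α) [IsFiniteMeasure m] :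
    Integrable (fun a ↦ dist (f a) (g a) ^ p) m := by
  refine .of_bound ((hf.dist hg).pow_const p).aestronglyMeasurable
    (Metric.diam (Set.univ : Set X) ^ p) (ae_of_all _ fun a ↦ ?_)
  rw [Real.norm_of_nonneg (by positivity)]
  gcongr
  exact Metric.dist_le_diam_of_mem (Bornology.isBounded_univ.2 ‹_›) trivial trivial

lemma lintegral_edist_rpow_eq_ofReal (hp : 0 < p) (π : Measure (X × X)) [IsFiniteMeasure π] :
    (∫⁻ q, edist q.1 q.2 ^ p ∂π) ^ (1 / p) =
      ENNReal.ofReal ((∫ q, dist q.1 q.2 ^ p ∂π) ^ (1 / p)) := by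
  rw [← ENNReal.ofReal_rpow_of_nonneg (by positivity) (by positivity),
    ofReal_integral_eq_lintegral_ofReal (integrable_dist_rpow measurable_fst measurable_snd hp.le π)
      (ae_of_all _ fun q ↦ by positivity)]
  simp only [edist_dist, ENNReal.ofReal_rpow_of_nonneg dist_nonneg hp.le]

lemma Wdist_rpow_le [IsProbabilityMeasure μ] (hp : 0 < p) {π : Measure (X × X)}
    (h : IsCoupling π μ ν) : Wdist p μ ν ^ p ≤ ∫ q, dist q.1 q.2 ^ p ∂π := by
  have := h.isProbabilityMeasure
  have hle : Wdist p μ ν ≤ (∫ q, dist q.1 q.2 ^ p ∂π) ^ (1 / p) := by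
    refine ENNReal.toReal_le_of_le_ofReal (by positivity) ?_
    rw [← lintegral_edist_rpow_eq_ofReal hp]
    exact iInf₂_le π h
  rw [one_div] at hle
  exact (Real.le_rpow_inv_iff_of_pos (Wdist_nonneg p μ ν) (by positivity) hp).1 hle

lemma le_Wdist_rpow [IsProbabilityMeasure μ] [IsProbabilityMeasure ν] (hp : 0 < p) {B : ℝ}
    (hB : ∀ π, IsCoupling π μ ν → B ≤ ∫ q, dist q.1 q.2 ^ p ∂π) : B ≤ Wdist p μ ν ^ p := by
  rcases le_or_gt B 0 with hB₀ | hB₀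
  · exact hB₀.trans (Real.rpow_nonneg (Wdist_nonneg p μ ν) p)
  rw [← Real.rpow_inv_le_iff_of_pos hB₀.le (Wdist_nonneg p μ ν) hp, ← one_div, Wdist,
    ← ENNReal.ofReal_le_iff_le_toReal]
  · refine le_iInf₂ fun π hπ ↦ ?_
    have := IsCoupling.isProbabilityMeasure (μ := μ) (ν := ν) hπ
    rw [lintegral_edist_rpow_eq_ofReal hp]
    gcongr
    exact hB π hπ
  · refine ne_top_of_le_ne_top ?_ (iInf₂_le (μ.prod ν) (isCoupling_prod μ ν))
    rw [lintegral_edist_rpow_eq_ofReal hp]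
    exact ENNReal.ofReal_ne_top

lemma Wdist_dirac_rpow (hp : 0 < p) (μ : Measure X) [IsProbabilityMeasure μ] (c : X) :
    Wdist p μ (Measure.dirac c) ^ p = ∫ x, dist x c ^ p ∂μ := by
  have hcost (π) (h : IsCoupling π μ (Measure.dirac c)) :
      ∫ q, dist q.1 q.2 ^ p ∂π = ∫ x, dist x c ^ p ∂μ := by
    rw [← h.integral_fst (integrable_dist_rpow measurable_id' measurable_const hp.le μ).1]
    refine integral_congr_ae ?_
    filter_upwards [h.ae_snd (P := (· = c)) (by simp [ae_dirac_eq])] with q hq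
    simp [hq]
  refine le_antisymm ?_ (le_Wdist_rpow hp fun π h ↦ (hcost π h).ge)
  exact (Wdist_rpow_le hp (isCoupling_prod μ _)).trans_eq (hcost _ (isCoupling_prod μ _))

lemma Wdist_dirac_dirac (hp : 0 < p) (a c : X) :
    Wdist p (Measure.dirac a) (Measure.dirac c) = dist a c := by
  rw [← Real.rpow_left_inj (Wdist_nonneg p _ _) dist_nonneg hp.ne', Wdist_dirac_rpow hp,
    integral_dirac]

lemma dist_eq_of_mem_support_of_Wdist_eq [IsProbabilityMeasure μ] [IsProbabilityMeasure ν]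
    (hp : 0 < p) {D : ℝ} (hD : ∀ x y : X, dist x y ≤ D) (h : Wdist p μ ν = D) {x y : X}
    (hx : x ∈ μ.support) (hy : y ∈ ν.support) : dist x y = D := by
  have hint := integrable_dist_rpow measurable_fst measurable_snd hp.le (μ.prod ν)
  have hle (q : X × X) : dist q.1 q.2 ^ p ≤ D ^ p := by gcongr; exact hD _ _
  have hcost : ∫ q, dist q.1 q.2 ^ p ∂(μ.prod ν) = ∫ _, D ^ p ∂(μ.prod ν) := by
    refine le_antisymm (integral_mono hint (integrable_const _) hle) ?_
    simpa [h] using Wdist_rpow_le hp (isCoupling_prod μ ν)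
  have hae : ∀ᵐ q ∂(μ.prod ν), dist q.1 q.2 = D := by
    filter_upwards [(integral_eq_iff_of_ae_le hint (integrable_const _) (ae_of_all _ hle)).1 hcost]
      with q hq
    exact (Real.rpow_left_inj dist_nonneg (dist_nonneg.trans (hD x y)) hp.ne').1 hq
  by_contra hne
  obtain ⟨U, V, hU, hV, hxU, hyV, hUV⟩ := isOpen_prod_iff.1
    (isOpen_ne_fun continuous_dist (continuous_const (y := D))) x y hne
  have hzero : μ.prod ν (U ×ˢ V) = 0 := measure_mono_null hUV (ae_iff.1 hae)
  rw [Measure.prod_prod] at hzero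
  exact mul_ne_zero ((Measure.mem_support_iff_forall x).1 hx U (hU.mem_nhds hxU)).ne'
    ((Measure.mem_support_iff_forall y).1 hy V (hV.mem_nhds hyV)).ne' hzero

lemma mem_WSet_iff (hp : 0 < p) : μ ∈ WSet X p ↔ IsProbabilityMeasure μ := by
  refine ⟨fun h ↦ h.1, fun h ↦ ⟨h, ?_⟩⟩
  obtain ⟨c⟩ := μ.nonempty_of_neZero
  refine ⟨c, ?_⟩
  have hint := integrable_dist_rpow measurable_id' (measurable_const (a := c)) hp.le μ
  simpa only [edist_dist, ENNReal.ofReal_rpow_of_nonneg dist_nonneg hp.le]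
    using hint.lintegral_lt_top

lemma ae_dist_eq_of_Wdist_dirac_eq [IsProbabilityMeasure μ] (hp : 0 < p) {D : ℝ}
    (hD : ∀ x y : X, dist x y ≤ D) {c : X} (h : Wdist p μ (Measure.dirac c) = D) :
    ∀ᵐ x ∂μ, dist x c = D := by
  have hc : c ∈ (Measure.dirac c).support := (Measure.mem_support_iff_forall c).2 fun U hU ↦ by
    simp [Measure.dirac_apply_of_mem (mem_of_mem_nhds hU)]
  filter_upwards [μ.support_mem_ae] with x hx
  exact dist_eq_of_mem_support_of_Wdist_eq hp hD h hx hc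

lemma Wdist_dirac_rpow_add [IsProbabilityMeasure μ] (hp : 0 < p) {c c' : X}
    (h : ∀ᵐ x ∂μ, x = c ∨ x = c') :
    Wdist p μ (Measure.dirac c) ^ p + Wdist p μ (Measure.dirac c') ^ p = dist c c' ^ p := by
  rw [Wdist_dirac_rpow hp, Wdist_dirac_rpow hp,
    ← integral_add (integrable_dist_rpow measurable_id' measurable_const hp.le μ)
      (integrable_dist_rpow measurable_id' measurable_const hp.le μ)]
  have hsum : ∀ᵐ x ∂μ, dist x c ^ p + dist x c' ^ p = dist c c' ^ p := by
    filter_upwards [h] with x hx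
    rcases hx with rfl | rfl <;> simp [dist_comm, Real.zero_rpow hp.ne']
  simp [integral_congr_ae hsum]

lemma Wdist_bernoulliMeasure_dirac_rpow (hp : 0 < p) (c c' : X) (t : unitInterval) :
    Wdist p Ber(c, c', t) (Measure.dirac c) ^ p = (1 - t) * dist c c' ^ p := by
  rw [Wdist_dirac_rpow hp, integral_bernoulliMeasure]
  simp [Real.zero_rpow hp.ne', dist_comm c' c]

end Wasserstein

section PushForward

variable {X : Type*} [MetricSpace X] [BoundedSpace X] [SecondCountableTopology X]
  [MeasurableSpace X] [BorelSpace X] {p : ℝ} {T : X → X}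

lemma Wdist_map_le (hp : 0 < p) (hT : Isometry T) (μ ν : Measure X) [IsProbabilityMeasure μ]
    [IsProbabilityMeasure ν] : Wdist p (μ.map T) (ν.map T) ≤ Wdist p μ ν := by
  have hTm : Measurable T := hT.continuous.measurable
  have := Measure.isProbabilityMeasure_map (μ := μ) hTm.aemeasurable
  refine (Real.rpow_le_rpow_iff (Wdist_nonneg _ _ _) (Wdist_nonneg _ _ _) hp).1 ?_
  refine le_Wdist_rpow hp fun π h ↦ (Wdist_rpow_le hp (h.map_prodMap hTm)).trans_eq ?_
  have := h.isProbabilityMeasure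
  have hTT : Measurable (Prod.map T T) := hTm.prodMap hTm
  rw [integral_map hTT.aemeasurable
    (integrable_dist_rpow measurable_fst measurable_snd hp.le _).1]
  simp only [Prod.map_fst, Prod.map_snd, hT.dist_eq]

lemma IsIsom.isometry {X : Type*} [PseudoMetricSpace X] {T : X → X} (hT : IsIsom T) : Isometry T :=
  .of_dist_eq hT.2

lemma IsIsom.measurable {X : Type*} [PseudoMetricSpace X] [MeasurableSpace X] [BorelSpace X]
    {T : X → X} (hT : IsIsom T) : Measurable T :=
  hT.isometry.continuous.measurable

lemma IsIsom.Wdist_map (hp : 0 < p) (hT : IsIsom T) (μ ν : Measure X) [IsProbabilityMeasure μ]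
    [IsProbabilityMeasure ν] : Wdist p (μ.map T) (ν.map T) = Wdist p μ ν := by
  obtain ⟨S, hST, hTS⟩ := Function.bijective_iff_has_inverse.1 hT.1
  have hS : Isometry S := hT.isometry.right_inv hTS
  have hmap (m : Measure X) : (m.map T).map S = m := by
    rw [Measure.map_map hS.continuous.measurable hT.measurable, hST.comp_eq_id, Measure.map_id]
  have (m : Measure X) [IsProbabilityMeasure m] : IsProbabilityMeasure (m.map T) :=
    Measure.isProbabilityMeasure_map hT.measurable.aemeasurable
  refine (Wdist_map_le hp hT.isometry μ ν).antisymm ?_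
  simpa only [hmap] using Wdist_map_le hp hS (μ.map T) (ν.map T)

end PushForward

section Embedding

/-- A distance-preserving self-map of the `p`-Wasserstein space over `X`, not required to be
surjective. -/
def IsWEmbedding (X : Type*) [MeasurableSpace X] [PseudoMetricSpace X] (p : ℝ)
    (Φ : Measure X → Measure X) : Prop :=
  Set.MapsTo Φ (WSet X p) (WSet X p) ∧
    ∀ μ ∈ WSet X p, ∀ ν ∈ WSet X p, Wdist p (Φ μ) (Φ ν) = Wdist p μ ν

lemma IsWIsometry.isWEmbedding {X : Type*} [MeasurableSpace X] [PseudoMetricSpace X] {p : ℝ}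
    {Φ : Measure X → Measure X} (hΦ : IsWIsometry X p Φ) : IsWEmbedding X p Φ :=
  ⟨hΦ.1.mapsTo, hΦ.2⟩

variable {X : Type*} [MetricSpace X] [BoundedSpace X] [SecondCountableTopology X]
  [MeasurableSpace X] {p : ℝ} {Φ : Measure X → Measure X}

lemma IsWEmbedding.isProbabilityMeasure [OpensMeasurableSpace X] (hΦ : IsWEmbedding X p Φ)
    (hp : 0 < p) (μ : Measure X) [IsProbabilityMeasure μ] : IsProbabilityMeasure (Φ μ) :=
  (hΦ.1 ((mem_WSet_iff hp).2 ‹_›)).1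

lemma IsWEmbedding.Wdist_eq [OpensMeasurableSpace X] (hΦ : IsWEmbedding X p Φ) (hp : 0 < p)
    (μ ν : Measure X) [IsProbabilityMeasure μ] [IsProbabilityMeasure ν] :
    Wdist p (Φ μ) (Φ ν) = Wdist p μ ν :=
  hΦ.2 μ ((mem_WSet_iff hp).2 ‹_›) ν ((mem_WSet_iff hp).2 ‹_›)

lemma IsWEmbedding.comp_map [BorelSpace X] (hΦ : IsWEmbedding X p Φ) (hp : 0 < p) {T : X → X}
    (hT : IsIsom T) : IsWEmbedding X p fun μ ↦ Φ (μ.map T) := by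
  have hprob (m : Measure X) (hm : m ∈ WSet X p) : IsProbabilityMeasure (m.map T) :=
    have := hm.1
    Measure.isProbabilityMeasure_map hT.measurable.aemeasurable
  refine ⟨fun μ hμ ↦ hΦ.1 ((mem_WSet_iff hp).2 (hprob μ hμ)), fun μ hμ ν hν ↦ ?_⟩
  have := hμ.1
  have := hν.1
  have := hprob μ hμ
  have := hprob ν hν
  exact (hΦ.Wdist_eq hp _ _).trans (hT.Wdist_map hp μ ν)

end Embedding

section TwoPoint

variable {X : Type*} [MeasurableSpace X] [MeasurableSingletonClass X] {μ : Measure X}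

lemma eq_dirac_of_ae_eq [IsProbabilityMeasure μ] {c : X} (h : ∀ᵐ x ∂μ, x = c) :
    μ = Measure.dirac c := by
  have hsum := Measure.ae_mem_finset_iff.1 (h.mono fun x hx ↦ Finset.mem_singleton.2 hx)
  have hmass : μ {c} = 1 := by simpa using congrArg (· Set.univ) hsum.symm
  simpa [hmass] using hsum

lemma ae_bernoulliMeasure (c c' : X) (t : unitInterval) : ∀ᵐ x ∂Ber(c, c', t), x = c ∨ x = c' := by
  rw [bernoulliMeasure_def, ae_add_measure_iff]
  exact ⟨Measure.ae_smul_measure (by simp [ae_dirac_eq]) _,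
    Measure.ae_smul_measure (by simp [ae_dirac_eq]) _⟩

lemma exists_eq_bernoulliMeasure [IsProbabilityMeasure μ] {c c' : X} (hc : c ≠ c')
    (h : ∀ᵐ x ∂μ, x = c ∨ x = c') :
    ∃ t : unitInterval, (t : ℝ) = μ.real {c} ∧ μ = Ber(c, c', t) := by
  have hsum := (Measure.ae_eq_or_eq_iff_eq_dirac_add_dirac hc).1 h
  have hc' : 1 - μ.real {c} = μ.real {c'} := by
    have hmass : μ {c} + μ {c'} = 1 := by simpa using congrArg (· Set.univ) hsum.symm
    rw [sub_eq_iff_eq_add', measureReal_def, measureReal_def,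
      ← ENNReal.toReal_add (measure_ne_top _ _) (measure_ne_top _ _), hmass, ENNReal.toReal_one]
  have hweight (t : unitInterval) : (unitInterval.toNNReal t : ENNReal) = ENNReal.ofReal t := by
    rw [← unitInterval.coe_toNNReal, ENNReal.ofReal_coe_nnreal]
  refine ⟨⟨μ.real {c}, measureReal_nonneg, measureReal_le_one⟩, rfl, hsum.trans ?_⟩
  simp only [bernoulliMeasure_def, ENNReal.smul_def, hweight, unitInterval.coe_symm_eq, hc']
  rw [ofReal_measureReal, ofReal_measureReal]

end TwoPoint

section TwoPointDistances

variable {X : Type*} [MetricSpace X] [BoundedSpace X] [SecondCountableTopology X]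
  [MeasurableSpace X] [OpensMeasurableSpace X] {p : ℝ} {c c' : X} {μ ν : Measure X}

lemma integrable_min_dist_rpow (hp : 0 < p) (c c' : X) (s : ℝ) (μ : Measure X)
    [IsFiniteMeasure μ] : Integrable (fun x ↦ min (dist x c ^ p - s) (dist x c' ^ p)) μ :=
  ((integrable_dist_rpow measurable_id' measurable_const hp.le μ).sub (integrable_const s)).inf
    (integrable_dist_rpow measurable_id' measurable_const hp.le μ)

-- Kantorovich duality for a two-point target, with the potential `s` at `c` and `0` at `c'`.
lemma integral_min_le_Wdist_bernoulliMeasure [IsProbabilityMeasure μ] (hp : 0 < p) (hc : c ≠ c')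
    (s : ℝ) (t : unitInterval) :
    ∫ x, min (dist x c ^ p - s) (dist x c' ^ p) ∂μ ≤ Wdist p μ Ber(c, c', t) ^ p - s * t := by
  classical
  rw [le_sub_iff_add_le]
  refine le_Wdist_rpow hp fun π hπ ↦ ?_
  have := hπ.isProbabilityMeasure
  let u : X → ℝ := fun y ↦ if y = c then s else 0
  have hu : Integrable u Ber(c, c', t) := integrable_bernoulliMeasure c c' t u
  have hint := integrable_min_dist_rpow hp c c' s μ
  have hut : ∫ y, u y ∂Ber(c, c', t) = s * t := by
    simp [u, integral_bernoulliMeasure, hc.symm, mul_comm]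
  rw [← hut, ← hπ.integral_fst hint.1, ← hπ.integral_snd hu.1,
    ← integral_add (hπ.integrable_fst hint) (hπ.integrable_snd hu)]
  refine integral_mono_ae ((hπ.integrable_fst hint).add (hπ.integrable_snd hu))
    (integrable_dist_rpow measurable_fst measurable_snd hp.le π) ?_
  filter_upwards [hπ.ae_snd (ae_bernoulliMeasure c c' t)] with q hq
  rcases hq with hq | hq
  · have hmin := min_le_left (dist q.1 c ^ p - s) (dist q.1 c' ^ p)
    simp only [hq, u, if_true]
    linarith
  · have hmin := min_le_right (dist q.1 c ^ p - s) (dist q.1 c' ^ p)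
    simp only [hq, u, hc.symm, if_false]
    linarith

-- The optimal plan sends `x` to whichever of `c` and `c'` realises the minimum.
lemma exists_Wdist_bernoulliMeasure_le_integral_min [IsProbabilityMeasure μ] (hp : 0 < p)
    (hc : c ≠ c') (s : ℝ) : ∃ t : unitInterval,
      Wdist p μ Ber(c, c', t) ^ p - s * t ≤ ∫ x, min (dist x c ^ p - s) (dist x c' ^ p) ∂μ := by
  classical
  let A : Set X := {x | dist x c ^ p - s < dist x c' ^ p}
  have hA : MeasurableSet A := measurableSet_lt (by fun_prop) (by fun_prop)
  let S : X → X := fun x ↦ if x ∈ A then c else c'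
  have hS : Measurable S := .ite hA measurable_const measurable_const
  have := Measure.isProbabilityMeasure_map (μ := μ) hS.aemeasurable
  obtain ⟨t, ht, hSt⟩ : ∃ t : unitInterval,
      (t : ℝ) = (μ.map S).real {c} ∧ μ.map S = Ber(c, c', t) :=
    exists_eq_bernoulliMeasure hc <| ae_map_iff hS.aemeasurable
      (by measurability) |>.2 <| ae_of_all _ fun x ↦ ite_eq_or_eq _ _ _
  have hSA : S ⁻¹' {c} = A := by
    ext x
    simp [S, hc.symm]
  have hst : s * t = ∫ x, A.indicator (fun _ ↦ s) x ∂μ := by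
    rw [ht, map_measureReal_apply hS (measurableSet_singleton c), hSA,
      integral_indicator_const _ hA, smul_eq_mul, mul_comm]
  have hcost : ∫ q, dist q.1 q.2 ^ p ∂(μ.map fun x ↦ (x, S x)) = ∫ x, dist x (S x) ^ p ∂μ :=
    integral_map (measurable_id.prodMk hS).aemeasurable
      (Measurable.pow_const (by fun_prop) p).aestronglyMeasurable
  refine ⟨t, ?_⟩
  rw [sub_le_iff_le_add, hst, ← hSt,
    ← integral_add (integrable_min_dist_rpow hp c c' s μ) ((integrable_const s).indicator hA)]
  refine (Wdist_rpow_le hp (isCoupling_map_graph hS μ)).trans_eq (hcost.trans ?_)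
  congr 1 with x
  by_cases hx : x ∈ A
  · have hmin : dist x c ^ p - s ≤ dist x c' ^ p := le_of_lt hx
    simp [S, hx, min_eq_left hmin]
  · have hmin : dist x c' ^ p ≤ dist x c ^ p - s := not_lt.1 hx
    simp [S, hx, min_eq_right hmin]

lemma isLeast_integral_min_dist [IsProbabilityMeasure μ] (hp : 0 < p) (hc : c ≠ c') (s : ℝ) :
    IsLeast (Set.range fun t : unitInterval ↦ Wdist p μ Ber(c, c', t) ^ p - s * t)
      (∫ x, min (dist x c ^ p - s) (dist x c' ^ p) ∂μ) := by
  obtain ⟨t, ht⟩ := exists_Wdist_bernoulliMeasure_le_integral_min (μ := μ) hp hc s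
  refine ⟨⟨t, ht.antisymm (integral_min_le_Wdist_bernoulliMeasure hp hc s t)⟩, ?_⟩
  rintro _ ⟨t, rfl⟩
  exact integral_min_le_Wdist_bernoulliMeasure hp hc s t

end TwoPointDistances

section Laws

variable {P P' : Measure ℝ} [IsProbabilityMeasure P] [IsProbabilityMeasure P']

lemma cdf_mul_sub_le_integral (hP : ∀ s, Integrable (fun x ↦ max (s - x) 0) P) (s s' : ℝ) :
    cdf P s * (s' - s) ≤ ∫ x, max (s' - x) 0 ∂P - ∫ x, max (s - x) 0 ∂P := by
  rw [cdf_eq_real, ← smul_eq_mul, ← integral_indicator_const _ measurableSet_Iic,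
    ← integral_sub (hP s') (hP s)]
  refine integral_mono ((integrable_const _).indicator measurableSet_Iic)
    ((hP s').sub (hP s)) fun x ↦ ?_
  by_cases hx : x ≤ s <;> simp [Set.indicator, hx] <;> grind

lemma integral_le_cdf_mul_sub (hP : ∀ s, Integrable (fun x ↦ max (s - x) 0) P) (s s' : ℝ) :
    ∫ x, max (s' - x) 0 ∂P - ∫ x, max (s - x) 0 ∂P ≤ cdf P s' * (s' - s) := by
  rw [cdf_eq_real, ← smul_eq_mul, ← integral_indicator_const _ measurableSet_Iic,
    ← integral_sub (hP s') (hP s)]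
  refine integral_mono ((hP s').sub (hP s)) ((integrable_const _).indicator measurableSet_Iic)
    fun x ↦ ?_
  by_cases hx : x ≤ s' <;> simp [Set.indicator, hx] <;> grind

lemma cdf_le_of_integral_eq (hP : ∀ s, Integrable (fun x ↦ max (s - x) 0) P)
    (hP' : ∀ s, Integrable (fun x ↦ max (s - x) 0) P')
    (h : ∀ s, ∫ x, max (s - x) 0 ∂P = ∫ x, max (s - x) 0 ∂P') (s : ℝ) : cdf P s ≤ cdf P' s := by
  have hlt : ∀ s' > s, cdf P s ≤ cdf P' s' := fun s' hs ↦ by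
    refine le_of_mul_le_mul_right ?_ (sub_pos.2 hs)
    refine (cdf_mul_sub_le_integral hP s s').trans ?_
    rw [h, h]
    exact integral_le_cdf_mul_sub hP' s s'
  exact ge_of_tendsto ((cdf P').right_continuous s |>.mono Set.Ioi_subset_Ici_self)
    (Filter.eventually_of_mem self_mem_nhdsWithin hlt)

lemma eq_of_integral_max_sub_eq (hP : ∀ s, Integrable (fun x ↦ max (s - x) 0) P)
    (hP' : ∀ s, Integrable (fun x ↦ max (s - x) 0) P')
    (h : ∀ s, ∫ x, max (s - x) 0 ∂P = ∫ x, max (s - x) 0 ∂P') : P = P' :=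
  Measure.eq_of_cdf P P' <| StieltjesFunction.ext fun s ↦
    (cdf_le_of_integral_eq hP hP' h s).antisymm
      (cdf_le_of_integral_eq hP' hP (fun s ↦ (h s).symm) s)

end Laws

section Determination

lemma eq_of_map_eq_of_injOn {X Y : Type*} [MeasurableSpace X] [StandardBorelSpace X]
    [MeasurableSpace Y] [MeasurableSpace.CountablySeparated Y] {μ ν : Measure X} {k : X → Y}
    (hk : Measurable k) {L : Set X} (hL : MeasurableSet L) (hinj : Set.InjOn k L)
    (hμ : ∀ᵐ x ∂μ, x ∈ L) (hν : ∀ᵐ x ∂ν, x ∈ L) (h : μ.map k = ν.map k) : μ = ν := by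
  have hmap (m : Measure X) (hm : ∀ᵐ x ∂m, x ∈ L) {A : Set X} (hA : MeasurableSet A) :
      m A = m.map k (k '' (A ∩ L)) := by
    rw [Measure.map_apply hk ((hA.inter hL).image_of_measurable_injOn hk
      (hinj.mono Set.inter_subset_right))]
    refine measure_congr (Filter.eventuallyEq_set.2 ?_)
    filter_upwards [hm] with x hx
    refine ⟨fun hxA ↦ ⟨x, ⟨hxA, hx⟩, rfl⟩, ?_⟩
    rintro ⟨y, ⟨hyA, hyL⟩, hyx⟩
    exact hinj hyL hx hyx ▸ hyA
  ext A hA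
  rw [hmap μ hμ hA, hmap ν hν hA, h]

variable {X : Type*} [MetricSpace X] [BoundedSpace X] [SecondCountableTopology X]
  [MeasurableSpace X] {p : ℝ} {c c' d d' : X} {μ ν : Measure X}
  [IsProbabilityMeasure μ] [IsProbabilityMeasure ν]

lemma map_dist_rpow_sub_eq [OpensMeasurableSpace X] (hp : 0 < p) (hc : c ≠ c')
    (h : ∀ t, Wdist p μ Ber(c, c', t) = Wdist p ν Ber(c, c', t)) :
    μ.map (fun x ↦ dist x c ^ p - dist x c' ^ p) =
      ν.map (fun x ↦ dist x c ^ p - dist x c' ^ p) := by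
  set k : X → ℝ := fun x ↦ dist x c ^ p - dist x c' ^ p
  have hk : Measurable k := by fun_prop
  have hput (m : Measure X) [IsProbabilityMeasure m] (s : ℝ) :
      Integrable (fun x ↦ max (s - k x) 0) m :=
    ((integrable_const s).sub ((integrable_dist_rpow measurable_id' measurable_const hp.le m).sub
      (integrable_dist_rpow measurable_id' measurable_const hp.le m))).sup (integrable_zero _ _ _)
  have hmin (m : Measure X) [IsProbabilityMeasure m] (s : ℝ) :
      ∫ x, max (s - k x) 0 ∂m = Wdist p m (Measure.dirac c') ^ p -
        ∫ x, min (dist x c ^ p - s) (dist x c' ^ p) ∂m := by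
    rw [Wdist_dirac_rpow hp,
      ← integral_sub (integrable_dist_rpow measurable_id' measurable_const hp.le m)
        (integrable_min_dist_rpow hp c c' s m)]
    congr 1 with x
    grind
  have hmap (m : Measure X) (s : ℝ) :
      ∫ y, max (s - y) 0 ∂(m.map k) = ∫ x, max (s - k x) 0 ∂m :=
    integral_map hk.aemeasurable (Measurable.aestronglyMeasurable (by fun_prop))
  have hint (m : Measure X) [IsProbabilityMeasure m] (s : ℝ) :
      Integrable (fun y ↦ max (s - y) 0) (m.map k) :=
    (integrable_map_measure (Measurable.aestronglyMeasurable (by fun_prop)) hk.aemeasurable).2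
      (hput m s)
  have := Measure.isProbabilityMeasure_map (μ := μ) hk.aemeasurable
  have := Measure.isProbabilityMeasure_map (μ := ν) hk.aemeasurable
  refine eq_of_integral_max_sub_eq (hint μ) (hint ν) fun s ↦ ?_
  have hleast : ∫ x, min (dist x c ^ p - s) (dist x c' ^ p) ∂μ =
      ∫ x, min (dist x c ^ p - s) (dist x c' ^ p) ∂ν := by
    refine (isLeast_integral_min_dist hp hc s).unique ?_
    simpa only [h] using isLeast_integral_min_dist (μ := ν) hp hc s
  have hzero : Wdist p μ (Measure.dirac c') = Wdist p ν (Measure.dirac c') := by simpa using h 0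
  rw [hmap, hmap, hmin, hmin, hleast, hzero]

lemma ae_dist_eq_of_Wdist_bernoulliMeasure_eq [OpensMeasurableSpace X] (hp : 0 < p) (hc : c ≠ c')
    (h : ∀ t, Wdist p μ Ber(c, c', t) = Wdist p ν Ber(c, c', t))
    (hμ : ∀ᵐ x ∂μ, dist x c = dist x c') : ∀ᵐ x ∂ν, dist x c = dist x c' := by
  have hk : Measurable fun x : X ↦ dist x c ^ p - dist x c' ^ p := by fun_prop
  have hν : ∀ᵐ x ∂ν, dist x c ^ p - dist x c' ^ p = 0 := by
    have hzero : MeasurableSet {r : ℝ | r = 0} := measurableSet_singleton 0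
    refine ae_of_ae_map hk.aemeasurable (p := (· = 0)) ?_
    rw [← map_dist_rpow_sub_eq hp hc h]
    refine (ae_map_iff hk.aemeasurable hzero).2 ?_
    filter_upwards [hμ] with x hx
    rw [hx, sub_self]
  filter_upwards [hν] with x hx
  exact (Real.rpow_left_inj dist_nonneg dist_nonneg hp.ne').1 (sub_eq_zero.1 hx)

lemma strictMonoOn_rpow_sub_rpow_const_sub (hp : 0 < p) (D : ℝ) :
    StrictMonoOn (fun r ↦ r ^ p - (D - r) ^ p) (Set.Icc 0 D) := fun r hr r' hr' hrr' ↦ by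
  have hpow : r ^ p < r' ^ p := Real.rpow_lt_rpow hr.1 hrr' hp
  have hpow' : (D - r') ^ p < (D - r) ^ p :=
    Real.rpow_lt_rpow (sub_nonneg.2 hr'.2) (sub_lt_sub_left hrr' D) hp
  exact sub_lt_sub hpow hpow'

/- The distances to mixtures of `c` and `c'` detect concentration on the bisector of `c` and `c'`;
there the distances to mixtures of `d` and `d'` detect the law of `dist · d`. -/
lemma eq_of_Wdist_bernoulliMeasure_eq [StandardBorelSpace X] [OpensMeasurableSpace X] (hp : 0 < p)
    (hc : c ≠ c') (hd : d ≠ d') {D : ℝ}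
    (hsum : ∀ x, dist x c = dist x c' → dist x d + dist x d' = D)
    (hinj : Set.InjOn (dist · d) {x | dist x c = dist x c'}) (hμ : ∀ᵐ x ∂μ, dist x c = dist x c')
    (hμν : ∀ t, Wdist p μ Ber(c, c', t) = Wdist p ν Ber(c, c', t))
    (hμν' : ∀ t, Wdist p μ Ber(d, d', t) = Wdist p ν Ber(d, d', t)) : μ = ν := by
  refine eq_of_map_eq_of_injOn (k := fun x ↦ dist x d ^ p - dist x d' ^ p) (by fun_prop)
    (measurableSet_eq_fun (by fun_prop) (by fun_prop)) (fun x hx y hy hxy ↦ hinj hx hy ?_) hμ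
    (ae_dist_eq_of_Wdist_bernoulliMeasure_eq hp hc hμν hμ) (map_dist_rpow_sub_eq hp hd hμν')
  have hmem (z) (hz : dist z c = dist z c') : dist z d ∈ Set.Icc 0 D :=
    ⟨dist_nonneg, hsum z hz ▸ le_add_of_nonneg_right dist_nonneg⟩
  refine (strictMonoOn_rpow_sub_rpow_const_sub hp D).injOn (hmem x hx) (hmem y hy) ?_
  simpa only [eq_sub_of_add_eq' (hsum x hx), eq_sub_of_add_eq' (hsum y hy)] using hxy

end Determination

section Square

lemma abs_fst_le_one (x : Qs) : |x.1.1| ≤ 1 :=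
  abs_le.2 ⟨x.2.1.1, x.2.2.1⟩

lemma abs_snd_le_one (x : Qs) : |x.1.2| ≤ 1 :=
  abs_le.2 ⟨x.2.1.2, x.2.2.2⟩

lemma dist_le_two (x y : Qs) : dist x y ≤ 2 := by
  have hbound {s t : ℝ} (hs : |s| ≤ 1) (ht : |t| ≤ 1) : dist s t ≤ 2 :=
    (abs_sub s t).trans (by linarith)
  exact max_le (hbound (abs_fst_le_one x) (abs_fst_le_one y))
    (hbound (abs_snd_le_one x) (abs_snd_le_one y))

lemma mk_mem_Qs {s t : ℝ} (hs : |s| ≤ 1) (ht : |t| ≤ 1) : (s, t) ∈ Qs :=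
  ⟨⟨(abs_le.1 hs).1, (abs_le.1 ht).1⟩, ⟨(abs_le.1 hs).2, (abs_le.1 ht).2⟩⟩

/-- The vertices of the square, indexed by their pairs of signs, so that `corner (-e)` is the vertex
antipodal to `corner e`. -/
def corner (e : ℤˣ × ℤˣ) : Qs :=
  ⟨(((e.1 : ℤ) : ℝ), ((e.2 : ℤ) : ℝ)), mk_mem_Qs (abs_unit_intCast _).le (abs_unit_intCast _).le⟩

variable {e f : ℤˣ × ℤˣ} {x y : Qs}

lemma abs_sub_unit {s : ℝ} (hs : |s| ≤ 1) (a : ℤˣ) :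
    |s - ((a : ℤ) : ℝ)| = 1 - ((a : ℤ) : ℝ) * s := by
  have hs' := abs_le.1 hs
  rcases Int.units_eq_one_or a with rfl | rfl
  · rw [abs_of_nonpos] <;> push_cast <;> linarith
  · rw [abs_of_nonneg] <;> push_cast <;> linarith

lemma dist_corner (x : Qs) (e : ℤˣ × ℤˣ) :
    dist x (corner e) = max (1 - ((e.1 : ℤ) : ℝ) * x.1.1) (1 - ((e.2 : ℤ) : ℝ) * x.1.2) := by
  rw [← abs_sub_unit (abs_fst_le_one x), ← abs_sub_unit (abs_snd_le_one x)]
  rfl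

lemma dist_corner_eq_two_iff :
    dist x (corner e) = 2 ↔ x.1.1 = -((e.1 : ℤ) : ℝ) ∨ x.1.2 = -((e.2 : ℤ) : ℝ) := by
  have hx₁ := abs_le.1 (abs_fst_le_one x)
  have hx₂ := abs_le.1 (abs_snd_le_one x)
  rw [dist_corner]
  generalize x.1.1 = s at *
  generalize x.1.2 = t at *
  rcases Int.units_eq_one_or e.1 with h₁ | h₁ <;> rcases Int.units_eq_one_or e.2 with h₂ | h₂ <;>
    rw [h₁, h₂] <;> push_cast <;> grind

lemma eq_corner_iff : x = corner e ↔ x.1.1 = ((e.1 : ℤ) : ℝ) ∧ x.1.2 = ((e.2 : ℤ) : ℝ) := by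
  rw [Subtype.ext_iff, Prod.ext_iff]
  rfl

lemma corner_injective : Function.Injective corner := fun e f h ↦ by
  have h' := eq_corner_iff.1 h
  exact Prod.ext (Units.ext (Int.cast_injective h'.1)) (Units.ext (Int.cast_injective h'.2))

lemma dist_corner_corner (h : e ≠ f) : dist (corner e) (corner f) = 2 := by
  refine dist_corner_eq_two_iff.2 ?_
  have hor : e.1 = -f.1 ∨ e.2 = -f.2 := by
    simpa only [← Int.units_ne_iff_eq_neg, ← not_and_or, ← Prod.ext_iff] using h
  rcases hor with h | h
  · exact .inl ((eq_corner_iff.1 rfl).1.trans (by simp [h]))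
  · exact .inr ((eq_corner_iff.1 rfl).2.trans (by simp [h]))

lemma dist_corner_eq_two_or (h : dist x y = 2) (e : ℤˣ × ℤˣ) :
    dist x (corner e) = 2 ∨ dist y (corner e) = 2 := by
  have hx₁ := abs_le.1 (abs_fst_le_one x)
  have hx₂ := abs_le.1 (abs_snd_le_one x)
  have hy₁ := abs_le.1 (abs_fst_le_one y)
  have hy₂ := abs_le.1 (abs_snd_le_one y)
  have hdist : max |x.1.1 - y.1.1| |x.1.2 - y.1.2| = 2 := h
  rw [dist_corner_eq_two_iff, dist_corner_eq_two_iff]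
  rcases Int.units_eq_one_or e.1 with h₁ | h₁ <;> rcases Int.units_eq_one_or e.2 with h₂ | h₂ <;>
    rw [h₁, h₂] <;> push_cast <;> grind

lemma eq_corner_or_eq_corner_neg (h : ∀ f, f ≠ e → f ≠ -e → dist x (corner f) = 2) :
    x = corner e ∨ x = corner (-e) := by
  have hflip₁ : ∀ e : ℤˣ × ℤˣ, (-e.1, e.2) ≠ e ∧ (-e.1, e.2) ≠ -e := by decide
  have hflip₂ : ∀ e : ℤˣ × ℤˣ, (e.1, -e.2) ≠ e ∧ (e.1, -e.2) ≠ -e := by decide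
  have h₁ := dist_corner_eq_two_iff.1 (h _ (hflip₁ e).1 (hflip₁ e).2)
  have h₂ := dist_corner_eq_two_iff.1 (h _ (hflip₂ e).1 (hflip₂ e).2)
  have hne (a : ℤˣ) : ((a : ℤ) : ℝ) ≠ -((a : ℤ) : ℝ) := self_ne_neg.2 (by simp)
  simp only [Units.val_neg, Int.cast_neg, neg_neg] at h₁ h₂
  simp only [eq_corner_iff, Prod.fst_neg, Prod.snd_neg, Units.val_neg, Int.cast_neg]
  rcases h₁ with h₁ | h₁ <;> rcases h₂ with h₂ | h₂
  · exact absurd (h₁.symm.trans h₂) (hne _)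
  · exact .inl ⟨h₁, h₂⟩
  · exact .inr ⟨h₂, h₁⟩
  · exact absurd (h₂.symm.trans h₁) (hne _)

lemma eq_corner_of_dist_eq_two (h : ∀ f, f ≠ e → dist x (corner f) = 2) : x = corner e := by
  refine (eq_corner_or_eq_corner_neg fun f hf _ ↦ h f hf).resolve_right fun hx ↦ ?_
  simpa [hx] using h (-e) (by simp [Prod.ext_iff])

lemma exists_dist_corner_lt_two (x : Qs) : ∃ e, dist x (corner e) < 2 := by
  by_contra! h
  have htwo (e) : dist x (corner e) = 2 := (dist_le_two _ _).antisymm (h e)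
  simpa [← eq_corner_of_dist_eq_two fun f _ ↦ htwo f] using htwo 1

lemma exists_perm_eq_corner {x : ℤˣ × ℤˣ → Qs} (hx : Pairwise fun e f ↦ dist (x e) (x f) = 2) :
    ∃ τ : Equiv.Perm (ℤˣ × ℤˣ), ∀ e, x e = corner (τ e) := by
  choose near hnear using fun e ↦ exists_dist_corner_lt_two (x e)
  have hfar {e f} (hef : e ≠ f) : dist (x e) (corner (near f)) = 2 :=
    (dist_corner_eq_two_or (hx hef) (near f)).resolve_right (hnear f).ne
  have hinj : Function.Injective near := fun e f hef ↦ by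
    by_contra hne
    exact (hnear e).ne (hef ▸ hfar hne)
  let τ := Equiv.ofBijective near (Finite.injective_iff_bijective.1 hinj)
  refine ⟨τ, fun e ↦ eq_corner_of_dist_eq_two fun g hg ↦ ?_⟩
  rw [← τ.apply_symm_apply g]
  exact hfar fun h ↦ hg (by rw [h, τ.apply_symm_apply])

lemma eq_or_eq_of_ne_of_ne_neg (h : f ≠ e) (h' : f ≠ -e) : f = (e.1, -e.2) ∨ f = (-e.1, e.2) := by
  decide +revert

lemma exists_midpoint (h : f ≠ e) (h' : f ≠ -e) : ∃ m, dist m (corner e) = 1 ∧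
    dist m (corner f) = 1 ∧ ∀ g, g ≠ e → g ≠ f → dist m (corner g) = 2 := by
  rcases eq_or_eq_of_ne_of_ne_neg h h' with rfl | rfl
  · refine ⟨⟨(((e.1 : ℤ) : ℝ), 0), mk_mem_Qs (abs_unit_intCast _).le (by simp)⟩, ?_, ?_, ?_⟩
    · simp [dist_corner, ← Int.cast_mul]
    · simp [dist_corner, ← Int.cast_mul]
    · intro g hg hg'
      have hge : g.1 = -e.1 := by decide +revert
      exact dist_corner_eq_two_iff.2 (.inl (by simp [hge]))
  · refine ⟨⟨(0, ((e.2 : ℤ) : ℝ)), mk_mem_Qs (by simp) (abs_unit_intCast _).le⟩, ?_, ?_, ?_⟩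
    · simp [dist_corner, ← Int.cast_mul]
    · simp [dist_corner, ← Int.cast_mul]
    · intro g hg hg'
      have hge : g.2 = -e.2 := by decide +revert
      exact dist_corner_eq_two_iff.2 (.inr (by simp [hge]))

lemma dist_corner_eq_dist_corner_neg_iff :
    dist x (corner e) = dist x (corner (-e)) ↔
      ((e.1 : ℤ) : ℝ) * x.1.1 + ((e.2 : ℤ) : ℝ) * x.1.2 = 0 := by
  simp only [dist_corner, Prod.fst_neg, Prod.snd_neg, Units.val_neg, Int.cast_neg]
  grind

lemma dist_corner_add_dist_corner_neg (hx : dist x (corner e) = dist x (corner (-e))) :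
    dist x (corner (e.1, -e.2)) + dist x (corner (-(e.1, -e.2))) = 2 := by
  rw [dist_corner_eq_dist_corner_neg_iff] at hx
  simp only [dist_corner, Prod.neg_mk, neg_neg, Units.val_neg, Int.cast_neg]
  grind

lemma injOn_dist_corner : Set.InjOn (dist · (corner (e.1, -e.2)))
    {x | dist x (corner e) = dist x (corner (-e))} := fun x hx y hy hxy ↦ by
  replace hx := dist_corner_eq_dist_corner_neg_iff.1 hx
  replace hy := dist_corner_eq_dist_corner_neg_iff.1 hy
  have h₁ : ((e.1 : ℤ) : ℝ) ≠ 0 := by simp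
  have h₂ : ((e.2 : ℤ) : ℝ) ≠ 0 := by simp
  simp only [dist_corner, Units.val_neg, Int.cast_neg] at hxy
  refine Subtype.ext (Prod.ext (mul_left_cancel₀ h₁ ?_) (mul_left_cancel₀ h₂ ?_)) <;> grind

end Square

section SquareIsometries

/-- The isometry of the square that multiplies the two coordinates by the given signs. -/
def reflectQs (a b : ℤˣ) (x : Qs) : Qs :=
  ⟨(((a : ℤ) : ℝ) * x.1.1, ((b : ℤ) : ℝ) * x.1.2),
    mk_mem_Qs (by simpa [abs_mul, abs_unit_intCast] using abs_fst_le_one x)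
      (by simpa [abs_mul, abs_unit_intCast] using abs_snd_le_one x)⟩

/-- The reflection of the square in its diagonal, exchanging the two coordinates. -/
def swapQs (x : Qs) : Qs :=
  ⟨x.1.swap, mk_mem_Qs (abs_snd_le_one x) (abs_fst_le_one x)⟩

lemma isIsom_reflectQs (a b : ℤˣ) : IsIsom (reflectQs a b) := by
  refine ⟨Function.Involutive.bijective fun x ↦ ?_, fun x y ↦ ?_⟩
  · simp [reflectQs, ← mul_assoc, ← Int.cast_mul]
  · simp [reflectQs, Subtype.dist_eq, Prod.dist_eq, Real.dist_eq, ← mul_sub, abs_mul,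
      abs_unit_intCast]

lemma isIsom_swapQs : IsIsom swapQs :=
  ⟨Function.Involutive.bijective fun _ ↦ rfl, fun _ _ ↦ max_comm _ _⟩

lemma IsIsom.comp {X : Type*} [PseudoMetricSpace X] {S T : X → X} (hS : IsIsom S) (hT : IsIsom T) :
    IsIsom (S ∘ T) :=
  ⟨hS.1.comp hT.1, fun x y ↦ (hS.2 _ _).trans (hT.2 x y)⟩

lemma reflectQs_corner (a b : ℤˣ) (e : ℤˣ × ℤˣ) :
    reflectQs a b (corner e) = corner (a * e.1, b * e.2) := by
  simp [reflectQs, corner]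

lemma swapQs_corner (e : ℤˣ × ℤˣ) : swapQs (corner e) = corner e.swap :=
  rfl

lemma eq_mul_or_eq_mul_swap_of_map_neg {τ : ℤˣ × ℤˣ → ℤˣ × ℤˣ} (hτ : Function.Injective τ)
    (hneg : ∀ e, τ (-e) = -τ e) : ∃ a : ℤˣ × ℤˣ, (∀ e, τ e = a * e) ∨ ∀ e, τ e = a * e.swap := by
  have hneg₁ := hneg 1
  have hneg₂ := hneg (1, -1)
  have hcover : ∀ e : ℤˣ × ℤˣ, e = 1 ∨ e = -1 ∨ e = (1, -1) ∨ e = -(1, -1) := by decide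
  have hne : τ (1, -1) ≠ τ 1 := hτ.ne (by decide)
  have hne' : τ (1, -1) ≠ -τ 1 := hneg 1 ▸ hτ.ne (by decide)
  refine ⟨τ 1, (eq_or_eq_of_ne_of_ne_neg hne hne').imp (fun h e ↦ ?_) fun h e ↦ ?_⟩ <;>
    rcases hcover e with rfl | rfl | rfl | rfl <;> simp_all [Prod.ext_iff]

lemma exists_isIsom_corner {τ : ℤˣ × ℤˣ → ℤˣ × ℤˣ} (hτ : Function.Injective τ)
    (hneg : ∀ e, τ (-e) = -τ e) : ∃ T, IsIsom T ∧ ∀ e, T (corner e) = corner (τ e) := by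
  obtain ⟨a, h | h⟩ := eq_mul_or_eq_mul_swap_of_map_neg hτ hneg
  · refine ⟨reflectQs a.1 a.2, isIsom_reflectQs _ _, fun e ↦ ?_⟩
    rw [h, reflectQs_corner]
    rfl
  · refine ⟨reflectQs a.1 a.2 ∘ swapQs, (isIsom_reflectQs _ _).comp isIsom_swapQs, fun e ↦ ?_⟩
    rw [h, Function.comp_apply, swapQs_corner, reflectQs_corner]
    rfl

end SquareIsometries

section CornerDiracs

variable {p : ℝ} {e : ℤˣ × ℤˣ} {μ : Measure Qs}

lemma exists_perm_eq_dirac_corner (hp : 0 < p) {m : ℤˣ × ℤˣ → Measure Qs}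
    [∀ e, IsProbabilityMeasure (m e)] (hm : Pairwise fun e f ↦ Wdist p (m e) (m f) = 2) :
    ∃ τ : Equiv.Perm (ℤˣ × ℤˣ), ∀ e, m e = Measure.dirac (corner (τ e)) := by
  choose x hx using fun e ↦ Measure.nonempty_support (NeZero.ne (m e))
  obtain ⟨τ, hτ⟩ := exists_perm_eq_corner fun e f hef ↦
    dist_eq_of_mem_support_of_Wdist_eq hp dist_le_two (hm hef) (hx e) (hx f)
  refine ⟨τ, fun e ↦ eq_dirac_of_ae_eq ?_⟩
  filter_upwards [(m e).support_mem_ae] with y hy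
  refine eq_corner_of_dist_eq_two fun g hg ↦ ?_
  rw [← τ.apply_symm_apply g, ← hτ]
  refine dist_eq_of_mem_support_of_Wdist_eq hp dist_le_two (hm fun h ↦ hg ?_) hy (hx _)
  rw [h, τ.apply_symm_apply]

lemma ae_eq_corner_or_eq_corner_neg [IsProbabilityMeasure μ] (hp : 0 < p)
    (h : ∀ f, f ≠ e → f ≠ -e → Wdist p μ (Measure.dirac (corner f)) = 2) :
    ∀ᵐ x ∂μ, x = corner e ∨ x = corner (-e) := by
  have hall : ∀ᵐ x ∂μ, ∀ f, f ≠ e → f ≠ -e → dist x (corner f) = 2 := by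
    simp only [ae_all_iff]
    exact fun f hf hf' ↦ ae_dist_eq_of_Wdist_dirac_eq hp dist_le_two (h f hf hf')
  filter_upwards [hall] with x hx
  exact eq_corner_or_eq_corner_neg hx

lemma corner_ne_corner_neg (e : ℤˣ × ℤˣ) : corner e ≠ corner (-e) :=
  corner_injective.ne (by decide +revert)

variable {Φ : Measure Qs → Measure Qs}

lemma IsWEmbedding.exists_perm_map_dirac_corner (hΦ : IsWEmbedding Qs p Φ) (hp : 0 < p) :
    ∃ τ : Equiv.Perm (ℤˣ × ℤˣ), ∀ e,
      Φ (Measure.dirac (corner e)) = Measure.dirac (corner (τ e)) := by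
  have (e : ℤˣ × ℤˣ) := hΦ.isProbabilityMeasure hp (Measure.dirac (corner e))
  refine exists_perm_eq_dirac_corner hp fun e f hef ↦ ?_
  exact (hΦ.Wdist_eq hp _ _).trans ((Wdist_dirac_dirac hp _ _).trans (dist_corner_corner hef))

lemma IsWEmbedding.perm_neg (hΦ : IsWEmbedding Qs p Φ) (hp₀ : 0 < p) (hp₁ : p ≠ 1)
    {τ : Equiv.Perm (ℤˣ × ℤˣ)}
    (hτ : ∀ e, Φ (Measure.dirac (corner e)) = Measure.dirac (corner (τ e))) (e : ℤˣ × ℤˣ) :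
    τ (-e) = -τ e := by
  by_contra hne
  obtain ⟨f, hf⟩ := τ.surjective (-τ e)
  have hfe : f ≠ e := fun h ↦ (corner_ne_corner_neg (τ e)) (by rw [← hf, h])
  have hfe' : f ≠ -e := fun h ↦ hne (h ▸ hf)
  obtain ⟨m, hme, hmf, hm⟩ := exists_midpoint hfe hfe'
  have := hΦ.isProbabilityMeasure hp₀ (Measure.dirac m)
  have hdist (g) : Wdist p (Φ (Measure.dirac m)) (Measure.dirac (corner (τ g))) =
      dist m (corner g) := by
    rw [← hτ, hΦ.Wdist_eq hp₀, Wdist_dirac_dirac hp₀]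
  have hae := ae_eq_corner_or_eq_corner_neg (e := τ e) (μ := Φ (Measure.dirac m)) hp₀
    fun g hg hg' ↦ by
      rw [← τ.apply_symm_apply g, hdist]
      refine hm _ (fun h ↦ hg ?_) fun h ↦ hg' ?_
      · rw [← h, τ.apply_symm_apply]
      · rw [← hf, ← h, τ.apply_symm_apply]
  -- A midpoint of two corners would force `1 ^ p + 1 ^ p = 2 ^ p`.
  have htwo := Wdist_dirac_rpow_add hp₀ hae
  rw [← hf, hdist, hdist, hme, hmf, dist_corner_corner (τ.injective.ne hfe.symm),
    Real.one_rpow, one_add_one_eq_two] at htwo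
  exact hp₁ ((Real.rpow_right_inj two_pos (by norm_num)).1 (htwo.symm.trans (Real.rpow_one 2).symm))

lemma IsWEmbedding.exists_isIsom_map_dirac_corner (hΦ : IsWEmbedding Qs p Φ) (hp₀ : 0 < p)
    (hp₁ : p ≠ 1) : ∃ T, IsIsom T ∧
      ∀ e, Φ ((Measure.dirac (corner e)).map T) = Measure.dirac (corner e) := by
  obtain ⟨τ, hτ⟩ := hΦ.exists_perm_map_dirac_corner hp₀
  obtain ⟨T, hT, hTτ⟩ := exists_isIsom_corner τ.symm.injective fun e ↦ by
    rw [Equiv.symm_apply_eq, hΦ.perm_neg hp₀ hp₁ hτ, τ.apply_symm_apply]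
  refine ⟨T, hT, fun e ↦ ?_⟩
  rw [Measure.map_dirac' hT.measurable, hTτ, hτ, τ.apply_symm_apply]

end CornerDiracs

section Diagonals

variable {p : ℝ} {Ψ : Measure Qs → Measure Qs} {μ : Measure Qs}

lemma IsWEmbedding.map_bernoulliMeasure_corner (hΨ : IsWEmbedding Qs p Ψ) (hp : 0 < p)
    (hfix : ∀ e, Ψ (Measure.dirac (corner e)) = Measure.dirac (corner e)) (e : ℤˣ × ℤˣ)
    (t : unitInterval) :
    Ψ Ber(corner e, corner (-e), t) = Ber(corner e, corner (-e), t) := by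
  have := hΨ.isProbabilityMeasure hp Ber(corner e, corner (-e), t)
  have hdist (f) : Wdist p (Ψ Ber(corner e, corner (-e), t)) (Measure.dirac (corner f)) =
      Wdist p Ber(corner e, corner (-e), t) (Measure.dirac (corner f)) := by
    simpa only [hfix] using hΨ.Wdist_eq hp Ber(corner e, corner (-e), t) (Measure.dirac (corner f))
  have hae := ae_eq_corner_or_eq_corner_neg (e := e) (μ := Ψ Ber(corner e, corner (-e), t)) hp
    fun f hf hf' ↦ by
      rw [hdist, ← Real.rpow_left_inj (Wdist_nonneg _ _ _) zero_le_two hp.ne',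
        Wdist_dirac_rpow hp, integral_bernoulliMeasure, dist_corner_corner hf.symm,
        dist_corner_corner hf'.symm, ← add_smul]
      simp
  obtain ⟨s, -, hs⟩ := exists_eq_bernoulliMeasure (corner_ne_corner_neg e) hae
  have hweight := hdist e
  rw [hs, ← Real.rpow_left_inj (Wdist_nonneg _ _ _) (Wdist_nonneg _ _ _) hp.ne',
    Wdist_bernoulliMeasure_dirac_rpow hp, Wdist_bernoulliMeasure_dirac_rpow hp] at hweight
  have hpos : 0 < dist (corner e) (corner (-e)) ^ p :=
    Real.rpow_pos_of_pos (dist_pos.2 (corner_ne_corner_neg e)) p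
  rw [hs, Subtype.ext (sub_right_injective (mul_right_cancel₀ hpos.ne' hweight))]

lemma IsWEmbedding.map_eq_self_of_ae_dist_corner_eq (hΨ : IsWEmbedding Qs p Ψ) (hp : 0 < p)
    (hfix : ∀ e, Ψ (Measure.dirac (corner e)) = Measure.dirac (corner e)) [IsProbabilityMeasure μ]
    (e : ℤˣ × ℤˣ) (hμ : ∀ᵐ x ∂μ, dist x (corner e) = dist x (corner (-e))) : Ψ μ = μ := by
  have := hΨ.isProbabilityMeasure hp μ
  have hdist (f t) : Wdist p μ Ber(corner f, corner (-f), t) =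
      Wdist p (Ψ μ) Ber(corner f, corner (-f), t) := by
    rw [← hΨ.Wdist_eq hp μ Ber(corner f, corner (-f), t),
      hΨ.map_bernoulliMeasure_corner hp hfix]
  exact (eq_of_Wdist_bernoulliMeasure_eq hp (corner_ne_corner_neg e)
    (corner_ne_corner_neg (e.1, -e.2)) (fun _ ↦ dist_corner_add_dist_corner_neg)
    injOn_dist_corner hμ (hdist e) (hdist _)).symm

lemma ae_mem_of_msupport_subset {X : Type*} [TopologicalSpace X] [HereditarilyLindelofSpace X]
    [MeasurableSpace X] {μ : Measure X} {L : Set X} (h : msupport μ ⊆ L) : ∀ᵐ x ∂μ, x ∈ L := by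
  filter_upwards [μ.support_mem_ae] with x hx
  exact h fun U hU hxU ↦ ((Measure.mem_support_iff_forall x).1 hx U (hU.mem_nhds hxU)).ne'

lemma dist_corner_eq_dist_corner_neg_of_mem_LplusQ {x : Qs} (hx : x ∈ LplusQ) :
    dist x (corner (1, -1)) = dist x (corner (-(1, -1))) :=
  dist_corner_eq_dist_corner_neg_iff.2 (by rw [show x.1.2 = x.1.1 from hx]; simp)

lemma dist_corner_eq_dist_corner_neg_of_mem_LminusQ {x : Qs} (hx : x ∈ LminusQ) :
    dist x (corner 1) = dist x (corner (-1)) :=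
  dist_corner_eq_dist_corner_neg_iff.2 (by rw [show x.1.2 = -x.1.1 from hx]; simp)

lemma exists_ae_dist_corner_eq (h : msupport μ ⊆ LplusQ ∨ msupport μ ⊆ LminusQ) :
    ∃ e, ∀ᵐ x ∂μ, dist x (corner e) = dist x (corner (-e)) :=
  h.elim
    (fun h ↦ ⟨(1, -1), (ae_mem_of_msupport_subset h).mono fun _ ↦
      dist_corner_eq_dist_corner_neg_of_mem_LplusQ⟩)
    (fun h ↦ ⟨1, (ae_mem_of_msupport_subset h).mono fun _ ↦
      dist_corner_eq_dist_corner_neg_of_mem_LminusQ⟩)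

end Diagonals

theorem Wp_Q_diagonally_rigid_general (p : ℝ) (hp₀ : 0 < p) (hp₁ : p ≠ 1)
    (Φ : Measure ↥Qs → Measure ↥Qs) (hΦ : IsWEmbedding ↥Qs p Φ) :
    ∃ T : ↥Qs → ↥Qs, IsIsom T ∧ ∀ μ ∈ WSet ↥Qs p,
      (msupport μ ⊆ LplusQ ∨ msupport μ ⊆ LminusQ) → Φ (μ.map T) = μ := by
  obtain ⟨T, hT, hfix⟩ := hΦ.exists_isIsom_map_dirac_corner hp₀ hp₁
  refine ⟨T, hT, fun μ hμ hsupp ↦ ?_⟩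
  have := hμ.1
  obtain ⟨e, he⟩ := exists_ae_dist_corner_eq hsupp
  exact (hΦ.comp_map hp₀ hT).map_eq_self_of_ae_dist_corner_eq hp₀ hfix e he

/-- Diagonal rigidity of `𝒲_p(Q, d_m)` for all `p > 1`: every isometry, composed with
the push-forward of a suitable isometry of `Q`, fixes all measures supported on `L₊` or
`L₋`. -/
theorem Wp_Q_diagonally_rigid (p : ℝ) (hp : 1 < p)
    (Φ : Measure ↥Qs → Measure ↥Qs) (hΦ : IsWIsometry ↥Qs p Φ) :
    ∃ T : ↥Qs → ↥Qs, IsIsom T ∧ ∀ μ ∈ WSet ↥Qs p,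
      (msupport μ ⊆ LplusQ ∨ msupport μ ⊆ LminusQ) → Φ (μ.map T) = μ :=
  Wp_Q_diagonally_rigid_general p (zero_lt_one.trans hp) hp.ne' Φ hΦ.isWEmbedding
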